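/- For any 1/2 < t < 1 and any real x ≥ 6·2^{1/(1−t)}, one has ∑_{n ≤ x} p_n^{-t} ≥ (7/20)·x^{1−t}/((1−t)(log x)^t), where the sum ranges over all positive integers n with n ≤ x. -/

import Mathlib

/-- The `n`-th prime number, 1-indexed: `nthPrime 1 = 2`, `nthPrime 2 = 3`, ... -/
noncomputable def nthPrime (n : ℕ) : ℕ := Nat.nth Nat.Prime (n - 1)

/-- The product of the primes below `100`. -/
def sieveModulus : ℕ := 2305567963945518424753102147331756070

/-- The number of integers in `[a, a + k)` coprime to `sieveModulus`. -/
def coprimeCount (a : ℕ) : ℕ → ℕ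
  | 0 => 0
  | k + 1 => coprimeCount a k + bif Nat.beq (Nat.gcd (a + k) sieveModulus) 1 then 1 else 0

theorem prime_of_gcd_sieveModulus {n : ℕ} (h1 : 2 ≤ n) (h2 : n < 10201)
    (h : n.gcd sieveModulus = 1) : n.Prime := by
  by_contra hn
  have h3 := Nat.minFac_sq_le_self (by lia) hn
  have h4 := Nat.minFac_prime (n := n) (by lia)
  have h5 : n.minFac < 101 := by nlinarith
  have key : ∀ q < 101, q.Prime → q ∣ sieveModulus := by
    intro q hq hp
    unfold sieveModulus
    interval_cases q <;> first | (norm_num; done) | (revert hp; norm_num)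
  have := Nat.dvd_gcd n.minFac_dvd (key _ h5 h4)
  rw [h] at this
  exact h4.one_lt.ne' (Nat.dvd_one.1 this)

theorem add_coprimeCount_le_count_prime {a c : ℕ} (k : ℕ) (h1 : 2 ≤ a) (h2 : a + k ≤ 10201)
    (hc : c ≤ Nat.count Nat.Prime a) : c + coprimeCount a k ≤ Nat.count Nat.Prime (a + k) := by
  induction k with
  | zero => simpa [coprimeCount] using hc
  | succ k ih =>
    rw [← add_assoc, Nat.count_succ, coprimeCount]
    have := ih (by lia)
    cases hb : Nat.beq (Nat.gcd (a + k) sieveModulus) 1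
    · simp only [cond_false]; lia
    · have := prime_of_gcd_sieveModulus (by lia) (by lia) (Nat.eq_of_beq_eq_true hb)
      simp only [cond_true, this, if_true]; lia

theorem le_count_prime_of_coprimeCount {a c : ℕ} (b d : ℕ) (hc : c ≤ Nat.count Nat.Prime a)
    (h1 : 2 ≤ a) (hab : a ≤ b) (h2 : b ≤ 10201) (h : d ≤ c + coprimeCount a (b - a)) :
    d ≤ Nat.count Nat.Prime b := by
  have := add_coprimeCount_le_count_prime (b - a) h1 (by lia) hc
  rw [Nat.add_sub_cancel' hab] at this
  exact h.trans this

theorem add_one_rpow_sub_one_div_le_sum {t : ℝ} (h0 : 0 ≤ t) (h1 : t < 1) (N : ℕ) :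
    (((N : ℝ) + 1) ^ (1 - t) - 1) / (1 - t) ≤ ∑ n ∈ Finset.Icc 1 N, (n : ℝ) ^ (-t) := by
  have hs : 0 < 1 - t := by linarith
  induction N with
  | zero => simp
  | succ N ih =>
    rw [Finset.sum_Icc_succ_top (by lia)]
    have hpos : (0 : ℝ) < (N : ℝ) + 1 := by positivity
    have bern := rpow_one_add_le_one_add_mul_self (s := 1 / ((N : ℝ) + 1))
      (by linarith [show 0 < 1 / ((N : ℝ) + 1) by positivity]) hs.le (by linarith)
    have hmul : ((N : ℝ) + 1 + 1) ^ (1 - t) =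
        ((N : ℝ) + 1) ^ (1 - t) * (1 + 1 / ((N : ℝ) + 1)) ^ (1 - t) := by
      rw [← Real.mul_rpow (by positivity) (by positivity)]
      congr 1
      field_simp
    have hneg : ((N : ℝ) + 1) ^ (-t) = ((N : ℝ) + 1) ^ (1 - t) / ((N : ℝ) + 1) := by
      rw [← Real.rpow_sub_one hpos.ne']
      congr 1
      ring
    push_cast
    rw [div_le_iff₀ hs] at ih ⊢
    rw [hmul, add_mul, hneg]
    have := mul_le_mul_of_nonneg_left bern (Real.rpow_nonneg hpos.le (1 - t))
    have e : ((N : ℝ) + 1) ^ (1 - t) / ((N : ℝ) + 1) * (1 - t) =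
      ((N : ℝ) + 1) ^ (1 - t) * ((1 - t) * (1 / ((N : ℝ) + 1))) := by ring
    rw [e]
    linarith

theorem rpow_sub_one_div_le_sum {t z : ℝ} (h0 : 0 ≤ t) (h1 : t < 1) (hz : 0 ≤ z) :
    (z ^ (1 - t) - 1) / (1 - t) ≤ ∑ n ∈ Finset.Icc 1 ⌊z⌋₊, (n : ℝ) ^ (-t) := by
  refine le_trans ?_ (add_one_rpow_sub_one_div_le_sum h0 h1 _)
  have := (Nat.lt_floor_add_one z).le
  have hs : 0 < 1 - t := by linarith
  gcongr

theorem nthPrime_le_of_large {n : ℕ} (hn : 1000 ≤ n) :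
    (nthPrime n : ℝ) ≤ 2 * n * Real.log n := by
  have hnR : (1000 : ℝ) ≤ n := by exact_mod_cast hn
  have hl : 6.9 < Real.log n := by
    have h1 : Real.log 1000 ≤ Real.log n := Real.log_le_log (by norm_num) hnR
    have h2 : Real.log 1000 = 3 * Real.log 2 + 3 * Real.log 5 := by
      rw [show (1000 : ℝ) = 2 ^ 3 * 5 ^ 3 by norm_num, Real.log_mul (by norm_num) (by norm_num),
        Real.log_pow, Real.log_pow]
      norm_num
    linarith [Real.log_two_gt_d9, Real.log_five_gt_d9]
  set l := Real.log n with hldef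
  set p := nthPrime n with hp
  have hpi : Nat.primeCounting p = n := by
    rw [hp, nthPrime, Nat.primeCounting, Nat.primeCounting', Nat.count_succ,
      Nat.count_nth_of_infinite Nat.infinite_setOfPred_prime, if_pos (Nat.prime_nth_prime _)]
    lia
  have cheb := (Chebyshev.psi_ge p).trans (Chebyshev.psi_le_primeCounting_mul_log p)
  rw [hpi] at cheb
  by_contra! hlt
  have hy : (0 : ℝ) < 2 * n * l := by nlinarith
  have hll : Real.log l ≤ l / 8 + 3 * Real.log 2 - 1 := by
    have h1 := Real.log_le_sub_one_of_pos (show 0 < l / 8 by linarith)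
    rw [Real.log_div (by linarith) (by norm_num), show (8 : ℝ) = 2 ^ 3 by norm_num,
      Real.log_pow] at h1
    norm_num at h1 ⊢
    linarith
  have hlogy : Real.log (2 * n * l) = Real.log 2 + l + Real.log l := by
    rw [Real.log_mul (by positivity) (by linarith), Real.log_mul (by norm_num) (by positivity)]
  have hp0 : (0 : ℝ) < p := hy.trans hlt
  have hlogp : Real.log p ≤ Real.log (2 * n * l) + (p - 2 * n * l) / (2 * n * l) := by
    have h1 := Real.log_le_sub_one_of_pos (show 0 < p / (2 * n * l) by positivity)
    rw [Real.log_div hp0.ne' hy.ne'] at h1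
    have : (p - 2 * n * l) / (2 * n * l) = p / (2 * n * l) - 1 := by field_simp
    linarith
  have hlogp1 : Real.log (p + 1) ≤ Real.log 2 + Real.log p := by
    rw [← Real.log_mul (by norm_num) hp0.ne']
    have : (1 : ℝ) ≤ p := by nlinarith
    exact Real.log_le_log (by linarith) (by linarith)
  have hd : ((n : ℝ) + 1) * ((p - 2 * n * l) / (2 * n * l)) ≤ (p - 2 * n * l) * (1 / 10) := by
    rw [mul_div_assoc', div_le_iff₀ hy]
    have : (n : ℝ) + 1 ≤ 1 / 10 * (2 * n * l) := by nlinarith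
    nlinarith
  have h2 := Real.log_two_gt_d9
  have h2' := Real.log_two_lt_d9
  have hA : ((n : ℝ) + 1) * Real.log p ≤
      (n + 1) * (Real.log 2 + l + (l / 8 + 3 * Real.log 2 - 1)) + (p - 2 * n * l) * (1 / 10) := by
    have : ((n : ℝ) + 1) * Real.log p ≤ (n + 1) * (Real.log 2 + l + (l / 8 + 3 * Real.log 2 - 1)
      + (p - 2 * n * l) / (2 * n * l)) := by
      gcongr
      linarith
    linarith
  have hB : (p - 2 * n * l) * (1 / 10) + 2 * n * l * Real.log 2 ≤ p * Real.log 2 := by nlinarith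
  have hC : 2 * n * l * Real.log 2 ≤
      (n + 1) * (4 * Real.log 2 + 9 / 8 * l - 1) + Real.log 2 := by linarith
  have hD : 2 * (n * l) * 0.6931 ≤ 2 * n * l * Real.log 2 := by
    have : 0 ≤ n * l := by positivity
    nlinarith
  have hE : ((n : ℝ) + 1) * (4 * Real.log 2 + 9 / 8 * l - 1) ≤ (n + 1) * (1.7728 + 9 / 8 * l) := by
    gcongr
    linarith
  nlinarith

theorem nthPrime_le_of_le_count {n c : ℕ} (a i j k Y : ℕ) (h1 : 1 ≤ n) (h2 : a ≤ n) (h3 : n ≤ c)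
    (hc : c ≤ Nat.count Nat.Prime (Y + 1)) (ha : a = 2 ^ i * 3 ^ j * 5 ^ k)
    (hY : (Y : ℝ) ≤ 2 * a * (i * 0.6931 + j * 1.0986 + k * 1.6094)) :
    (nthPrime n : ℝ) ≤ 2 * n * Real.log n := by
  have hp : nthPrime n ≤ Y := Nat.lt_succ_iff.1 (Nat.nth_lt_of_lt_count (by lia))
  have ha0 : (0 : ℝ) < a := by rw [ha]; positivity
  have hlog : Real.log a = i * Real.log 2 + j * Real.log 3 + k * Real.log 5 := by
    rw [ha]
    push_cast
    rw [Real.log_mul (by positivity) (by positivity), Real.log_mul (by positivity) (by positivity),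
      Real.log_pow, Real.log_pow, Real.log_pow]
  have hlog' : i * 0.6931 + j * 1.0986 + k * 1.6094 ≤ Real.log a := by
    rw [hlog]
    gcongr
    · linarith [Real.log_two_gt_d9]
    · linarith [Real.log_three_gt_d9]
    · linarith [Real.log_five_gt_d9]
  have han : (a : ℝ) ≤ n := by exact_mod_cast h2
  calc (nthPrime n : ℝ) ≤ Y := by exact_mod_cast hp
    _ ≤ 2 * a * (i * 0.6931 + j * 1.0986 + k * 1.6094) := hY
    _ ≤ 2 * n * Real.log n := by gcongr; exact hlog'.trans (Real.log_le_log ha0 han)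

theorem nthPrime_le_two_mul_log {n : ℕ} (hn : 3 ≤ n) :
    (nthPrime n : ℝ) ≤ 2 * n * Real.log n := by
  rcases le_or_gt 1000 n with h | h
  · exact nthPrime_le_of_large h
  have c6 : 3 ≤ Nat.count Nat.Prime 6 := by norm_num [Nat.count_succ]
  have c12 : 5 ≤ Nat.count Nat.Prime 12 := by norm_num [Nat.count_succ]
  have c20 : 8 ≤ Nat.count Nat.Prime 20 := by norm_num [Nat.count_succ]
  have c38 : 12 ≤ Nat.count Nat.Prime 38 := by norm_num [Nat.count_succ]
  have c60 : 17 ≤ Nat.count Nat.Prime 60 := by norm_num [Nat.count_succ]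
  have c104 : 27 ≤ Nat.count Nat.Prime 104 := by norm_num [Nat.count_succ]
  have c174 := le_count_prime_of_coprimeCount 174 40 c104
    (by norm_num) (by norm_num) (by norm_num) (by decide +kernel)
  have c294 := le_count_prime_of_coprimeCount 294 62 c174
    (by norm_num) (by norm_num) (by norm_num) (by decide +kernel)
  have c492 := le_count_prime_of_coprimeCount 492 94 c294
    (by norm_num) (by norm_num) (by norm_num) (by decide +kernel)
  have c810 := le_count_prime_of_coprimeCount 810 140 c492
    (by norm_num) (by norm_num) (by norm_num) (by decide +kernel)
  have c1322 := le_count_prime_of_coprimeCount 1322 216 c810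
    (by norm_num) (by norm_num) (by norm_num) (by decide +kernel)
  have c1817 := le_count_prime_of_coprimeCount 1817 280 c1322
    (by norm_num) (by norm_num) (by norm_num) (by decide +kernel)
  have c2312 := le_count_prime_of_coprimeCount 2312 344 c1817
    (by norm_num) (by norm_num) (by norm_num) (by decide +kernel)
  have c2788 := le_count_prime_of_coprimeCount 2788 404 c2312
    (by norm_num) (by norm_num) (by norm_num) (by decide +kernel)
  have c3264 := le_count_prime_of_coprimeCount 3264 461 c2788
    (by norm_num) (by norm_num) (by norm_num) (by decide +kernel)
  have c3740 := le_count_prime_of_coprimeCount 3740 522 c3264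
    (by norm_num) (by norm_num) (by norm_num) (by decide +kernel)
  have c4268 := le_count_prime_of_coprimeCount 4268 585 c3740
    (by norm_num) (by norm_num) (by norm_num) (by decide +kernel)
  have c4796 := le_count_prime_of_coprimeCount 4796 645 c4268
    (by norm_num) (by norm_num) (by norm_num) (by decide +kernel)
  have c5324 := le_count_prime_of_coprimeCount 5324 705 c4796
    (by norm_num) (by norm_num) (by norm_num) (by decide +kernel)
  have c5852 := le_count_prime_of_coprimeCount 5852 769 c5324
    (by norm_num) (by norm_num) (by norm_num) (by decide +kernel)
  have c6380 := le_count_prime_of_coprimeCount 6380 832 c5852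
    (by norm_num) (by norm_num) (by norm_num) (by decide +kernel)
  have c6893 := le_count_prime_of_coprimeCount 6893 886 c6380
    (by norm_num) (by norm_num) (by norm_num) (by decide +kernel)
  have c7406 := le_count_prime_of_coprimeCount 7406 939 c6893
    (by norm_num) (by norm_num) (by norm_num) (by decide +kernel)
  have c7920 := le_count_prime_of_coprimeCount 7920 1000 c7406
    (by norm_num) (by norm_num) (by norm_num) (by decide +kernel)
  rcases le_or_gt n 3 with h3 | h3
  · exact nthPrime_le_of_le_count 3 0 1 0 5 (by lia) (by lia) (by lia) c6 (by norm_num)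
      (by norm_num)
  rcases le_or_gt n 5 with h5 | h5
  · exact nthPrime_le_of_le_count 4 2 0 0 11 (by lia) (by lia) (by lia) c12 (by norm_num)
      (by norm_num)
  rcases le_or_gt n 8 with h8 | h8
  · exact nthPrime_le_of_le_count 6 1 1 0 19 (by lia) (by lia) (by lia) c20 (by norm_num)
      (by norm_num)
  rcases le_or_gt n 12 with h12 | h12
  · exact nthPrime_le_of_le_count 9 0 2 0 37 (by lia) (by lia) (by lia) c38 (by norm_num)
      (by norm_num)
  rcases le_or_gt n 17 with h17 | h17
  · exact nthPrime_le_of_le_count 12 2 1 0 59 (by lia) (by lia) (by lia) c60 (by norm_num)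
      (by norm_num)
  rcases le_or_gt n 27 with h27 | h27
  · exact nthPrime_le_of_le_count 18 1 2 0 103 (by lia) (by lia) (by lia) c104 (by norm_num)
      (by norm_num)
  rcases le_or_gt n 40 with h40 | h40
  · exact nthPrime_le_of_le_count 27 0 3 0 173 (by lia) (by lia) (by lia) c174 (by norm_num)
      (by norm_num)
  rcases le_or_gt n 62 with h62 | h62
  · exact nthPrime_le_of_le_count 40 3 0 1 293 (by lia) (by lia) (by lia) c294 (by norm_num)
      (by norm_num)
  rcases le_or_gt n 94 with h94 | h94
  · exact nthPrime_le_of_le_count 60 2 1 1 491 (by lia) (by lia) (by lia) c492 (by norm_num)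
      (by norm_num)
  rcases le_or_gt n 140 with h140 | h140
  · exact nthPrime_le_of_le_count 90 1 2 1 809 (by lia) (by lia) (by lia) c810 (by norm_num)
      (by norm_num)
  rcases le_or_gt n 216 with h216 | h216
  · exact nthPrime_le_of_le_count 135 0 3 1 1321 (by lia) (by lia) (by lia) c1322 (by norm_num)
      (by norm_num)
  rcases le_or_gt n 344 with h344 | h344
  · exact nthPrime_le_of_le_count 216 3 3 0 2311 (by lia) (by lia) (by lia) c2312 (by norm_num)
      (by norm_num)
  rcases le_or_gt n 522 with h522 | h522
  · exact nthPrime_le_of_le_count 324 2 4 0 3739 (by lia) (by lia) (by lia) c3740 (by norm_num)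
      (by norm_num)
  rcases le_or_gt n 832 with h832 | h832
  · exact nthPrime_le_of_le_count 512 9 0 0 6379 (by lia) (by lia) (by lia) c6380 (by norm_num)
      (by norm_num)
  exact nthPrime_le_of_le_count 810 1 4 1 7919 (by lia) (by lia) (by lia) c7920 (by norm_num)
      (by norm_num)

theorem nthPrime_le_of_le {n : ℕ} {z : ℝ} (hn : 1 ≤ n) (hz : 4 ≤ z) (hnz : (n : ℝ) ≤ z) :
    (nthPrime n : ℝ) ≤ 2 * n * Real.log z := by
  have hlz : 2 * Real.log 2 ≤ Real.log z := by
    have := Real.log_le_log (by norm_num) hz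
    rwa [show (4 : ℝ) = 2 ^ 2 by norm_num, Real.log_pow, Nat.cast_ofNat] at this
  have h2 := Real.log_two_gt_d9
  rcases le_or_gt 3 n with h | h
  · refine (nthPrime_le_two_mul_log h).trans ?_
    have : (0 : ℝ) < n := by positivity
    gcongr
  · interval_cases n
    · simp only [nthPrime, Nat.sub_self, Nat.nth_prime_zero_eq_two]
      norm_num
      linarith
    · simp only [nthPrime, Nat.reduceSub, Nat.nth_prime_one_eq_three]
      norm_num
      linarith

theorem nthPrime_pos (n : ℕ) : 0 < nthPrime n := (Nat.prime_nth_prime _).pos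

/-- Splitting the sum at `√x` gains a factor `2 ^ t` on the initial segment. -/
theorem le_sum_nthPrime_rpow_neg {t x : ℝ} (h0 : 0 ≤ t) (h1 : t < 1) (hx : 16 ≤ x) :
    (2 * Real.log x) ^ (-t) * ((x ^ (1 - t) - 1) / (1 - t) +
      (2 ^ t - 1) * ((√x ^ (1 - t) - 1) / (1 - t))) ≤
      ∑ n ∈ Finset.Icc 1 ⌊x⌋₊, (nthPrime n : ℝ) ^ (-t) := by
  have hsq : 4 ≤ √x := Real.le_sqrt_of_sq_le (by linarith)
  have hsqx : √x ≤ x := Real.sqrt_le_iff.2 ⟨by linarith, by nlinarith⟩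
  have hL : 0 < Real.log x := Real.log_pos (by linarith)
  have h2t : 0 ≤ (2 : ℝ) ^ t - 1 := by linarith [Real.one_le_rpow (x := 2) (by norm_num) h0]
  have hx1 := rpow_sub_one_div_le_sum h0 h1 (show 0 ≤ x by linarith)
  have hx2 := rpow_sub_one_div_le_sum h0 h1 (Real.sqrt_nonneg x)
  have hsub : Finset.Icc 1 ⌊√x⌋₊ ⊆ Finset.Icc 1 ⌊x⌋₊ :=
    Finset.Icc_subset_Icc_right (Nat.floor_mono hsqx)
  calc _ ≤ (2 * Real.log x) ^ (-t) * (∑ n ∈ Finset.Icc 1 ⌊x⌋₊, (n : ℝ) ^ (-t) +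
        (2 ^ t - 1) * ∑ n ∈ Finset.Icc 1 ⌊√x⌋₊, (n : ℝ) ^ (-t)) := by gcongr
    _ = ∑ n ∈ Finset.Icc 1 ⌊x⌋₊, (2 * Real.log x) ^ (-t) * ((n : ℝ) ^ (-t) +
        (2 ^ t - 1) * if n ∈ Finset.Icc 1 ⌊√x⌋₊ then (n : ℝ) ^ (-t) else 0) := by
      rw [← Finset.mul_sum, Finset.sum_add_distrib, ← Finset.mul_sum, Finset.sum_ite_mem,
        Finset.inter_eq_right.2 hsub]
    _ ≤ _ := by
      refine Finset.sum_le_sum fun n hn ↦ ?_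
      rw [Finset.mem_Icc] at hn
      have hn0 : (0 : ℝ) < n := by exact_mod_cast hn.1
      have hp0 : (0 : ℝ) < nthPrime n := by exact_mod_cast nthPrime_pos n
      split_ifs with h
      · rw [Finset.mem_Icc] at h
        have hle := nthPrime_le_of_le h.1 hsq ((Nat.le_floor_iff (by positivity)).1 h.2)
        rw [Real.log_sqrt (by linarith)] at hle
        have hcalc : (2 * Real.log x) ^ (-t) * ((n : ℝ) ^ (-t) + (2 ^ t - 1) * (n : ℝ) ^ (-t)) =
            (n * Real.log x) ^ (-t) := by
          rw [Real.mul_rpow (by norm_num) hL.le, Real.mul_rpow hn0.le hL.le,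
            Real.rpow_neg (by norm_num : (0 : ℝ) ≤ 2)]
          have : (0 : ℝ) < 2 ^ t := by positivity
          field_simp
          ring
        rw [hcalc]
        exact Real.rpow_le_rpow_of_nonpos hp0 (by linarith) (by linarith)
      · have hle := nthPrime_le_of_le hn.1 (by linarith)
          ((Nat.le_floor_iff (by linarith)).1 hn.2)
        rw [mul_zero, add_zero, ← Real.mul_rpow (by positivity) hn0.le]
        exact Real.rpow_le_rpow_of_nonpos hp0 (by linarith) (by linarith)

theorem sum_reciprocal_prime_powers_lower_bound'
    (t x : ℝ) (ht₁ : 1 / 2 < t) (ht₂ : t < 1)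
    (hx : 6 * (2 : ℝ) ^ (1 / (1 - t)) ≤ x) :
    7 / 20 * (x ^ (1 - t) / ((1 - t) * Real.log x ^ t)) ≤
      ∑ n ∈ Finset.Icc 1 ⌊x⌋₊, (nthPrime n : ℝ) ^ (-t) := by
  have hs : 0 < 1 - t := by linarith
  have h4 : (4 : ℝ) ≤ 2 ^ (1 / (1 - t)) := by
    have h : (2 : ℝ) ≤ 1 / (1 - t) := by rw [le_div_iff₀ hs]; linarith
    have := Real.rpow_le_rpow_of_exponent_le (x := 2) (by norm_num) h
    norm_num at this ⊢
    exact this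
  have hx16 : 16 ≤ x := by linarith
  have hL : 0 < Real.log x := Real.log_pos (by linarith)
  refine le_trans ?_ (le_sum_nthPrime_rpow_neg (by linarith) ht₂ hx16)
  set Y := √x ^ (1 - t) with hY
  have hXY : x ^ (1 - t) = Y ^ 2 := by
    rw [hY, sq, ← Real.mul_rpow (by positivity) (by positivity), Real.mul_self_sqrt (by linarith)]
  have hX2 : 2 ≤ Y ^ 2 := by
    rw [← hXY]
    calc (2 : ℝ) = (2 ^ (1 / (1 - t))) ^ (1 - t) := by
          rw [← Real.rpow_mul (by norm_num), one_div_mul_cancel hs.ne', Real.rpow_one]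
      _ ≤ x ^ (1 - t) := Real.rpow_le_rpow (by positivity) (by linarith) hs.le
  have hY0 : 0 ≤ Y := by positivity
  have hY14 : 1.41 ≤ Y := by nlinarith
  have ha : (2 : ℝ) ^ t ≤ 2 := by
    simpa using Real.rpow_le_rpow_of_exponent_le (x := 2) (by norm_num) ht₂.le
  have ha0 : (0 : ℝ) < 2 ^ t := by positivity
  have hLt : 0 < Real.log x ^ t := by positivity
  rw [hXY, Real.rpow_neg (by positivity), Real.mul_rpow (by norm_num) hL.le]
  have key : 7 / 20 * Y ^ 2 * 2 ^ t ≤ Y ^ 2 - 1 + (2 ^ t - 1) * (Y - 1) := by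
    have hq : 0 ≤ 7 / 20 * Y ^ 2 - Y + 1 := by nlinarith [sq_nonneg (7 * Y - 10)]
    nlinarith [mul_nonneg (sub_nonneg.2 ha) hq]
  have e1 : 7 / 20 * (Y ^ 2 / ((1 - t) * Real.log x ^ t)) =
      (7 / 20 * Y ^ 2 * 2 ^ t) / (2 ^ t * ((1 - t) * Real.log x ^ t)) := by
    field_simp
  have e2 : (2 ^ t * Real.log x ^ t)⁻¹ *
      ((Y ^ 2 - 1) / (1 - t) + (2 ^ t - 1) * ((Y - 1) / (1 - t))) =
      (Y ^ 2 - 1 + (2 ^ t - 1) * (Y - 1)) / (2 ^ t * ((1 - t) * Real.log x ^ t)) := by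
    field_simp
  rw [e1, e2]
  gcongr
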